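/- arXiv:2104.00755 — 5 statements merged into one kernel-verified Lean document; each statement's English description precedes it below -/
import Mathlib

section
/- Fix K ≥ 1 and z ∈ ℝ^K. There exists a unique τ ∈ ℝ such that Σ_{i=1}^K max(z_i − τ, 0) = 1. Moreover, the vector y* with y*_i = max(z_i − τ, 0) lies in Δ_{K-1} and is the unique minimizer of the Euclidean distance ‖y − z‖₂ over y ∈ Δ_{K-1}; that is, sparsemax(z) = y*. -/
/-!
The sum `∑ i, max (z i - τ) 0` is continuous in `τ`, is at least `1` for small `τ` and vanishes for
large `τ`, so it takes the value `1`; it is strictly decreasing wherever it is positive, so it does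
so only once.

With `p i = max (z i - τ) 0`, the residual `p i - z i + τ` is nonnegative and vanishes wherever
`p i > 0` (complementary slackness). Expanding the square around `p` and summing, the terms in `τ`
cancel because `y` and `p` have the same total mass, which leaves
`‖p - z‖² + ‖y - p‖² ≤ ‖y - z‖²` for every `y` in the simplex. Both minimality of `p` and its
uniqueness follow.
-/

theorem existsUnique_threshold (K : ℕ) (hK : 1 ≤ K) (z : Fin K → ℝ) :
    ∃! τ : ℝ, ∑ i : Fin K, max (z i - τ) 0 = 1 := by
  have hlt : ∀ a b : ℝ, a < b → ∑ i : Fin K, max (z i - b) 0 = 1 →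
      ∑ i : Fin K, max (z i - b) 0 < ∑ i : Fin K, max (z i - a) 0 := by
    intro a b hab hb
    -- Since the sum at `b` is `1`, some coordinate is active there, and it gives strictness.
    obtain ⟨i, hi, hpos⟩ : ∃ i ∈ Finset.univ, 0 < max (z i - b) 0 := by
      by_contra! h
      have := Finset.sum_nonpos h
      linarith
    refine Finset.sum_lt_sum (fun j _ => max_le_max (by linarith) le_rfl) ⟨i, hi, ?_⟩
    have hib : 0 < z i - b := by simpa using hpos
    rw [max_eq_left hib.le, max_eq_left (by linarith)]
    linarith
  have hcont : Continuous fun τ : ℝ => ∑ i : Fin K, max (z i - τ) 0 := by fun_prop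
  let i₀ : Fin K := ⟨0, hK⟩
  have hbound : ∀ i, z i ≤ ∑ j, |z j| := fun i =>
    (le_abs_self _).trans
      (Finset.single_le_sum (f := fun j => |z j|) (fun j _ => abs_nonneg _) (Finset.mem_univ i))
  have hlow : 1 ≤ ∑ i : Fin K, max (z i - (z i₀ - 1)) 0 := by
    refine le_trans ?_ (Finset.single_le_sum (f := fun i => max (z i - (z i₀ - 1)) 0)
      (fun j _ => le_max_right _ _) (Finset.mem_univ i₀))
    simp
  have hhigh : ∑ i : Fin K, max (z i - ∑ j, |z j|) 0 ≤ 1 := by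
    rw [Finset.sum_eq_zero fun i _ => max_eq_right (by linarith [hbound i])]
    exact zero_le_one
  obtain ⟨τ, -, hτ⟩ := intermediate_value_Icc' (by linarith [hbound i₀] : z i₀ - 1 ≤ ∑ j, |z j|)
    hcont.continuousOn ⟨hhigh, hlow⟩
  refine ⟨τ, hτ, fun σ hσ => ?_⟩
  rcases lt_trichotomy σ τ with h | h | h
  · have := hlt _ _ h hτ
    simp only at hτ hσ
    linarith
  · exact h
  · have := hlt _ _ h hσ
    simp only at hτ hσ
    linarith

/-- The Pythagorean inequality for the thresholded vector, which is the variational inequality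
characterizing it as the projection of `z` onto the simplex. -/
theorem threshold_pythagoras {K : ℕ} {z y : Fin K → ℝ} {τ : ℝ}
    (hτ : ∑ i : Fin K, max (z i - τ) 0 = 1) (hy : y ∈ stdSimplex ℝ (Fin K)) :
    ∑ i : Fin K, (max (z i - τ) 0 - z i) ^ 2 + ∑ i : Fin K, (y i - max (z i - τ) 0) ^ 2
      ≤ ∑ i : Fin K, (y i - z i) ^ 2 := by
  have hpt : ∀ i, (max (z i - τ) 0 - z i) ^ 2 + (y i - max (z i - τ) 0) ^ 2
      - 2 * τ * (y i - max (z i - τ) 0) ≤ (y i - z i) ^ 2 := by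
    intro i
    have hyi := hy.1 i
    rcases le_total (z i - τ) 0 with h | h
    · rw [max_eq_right h]
      nlinarith [mul_nonneg hyi (sub_nonneg.2 h)]
    · rw [max_eq_left h]
      apply le_of_eq
      ring
  have hsum := Finset.sum_le_sum fun i (_ : i ∈ Finset.univ) => hpt i
  rw [Finset.sum_sub_distrib, Finset.sum_add_distrib, ← Finset.mul_sum, Finset.sum_sub_distrib,
    hτ, hy.2] at hsum
  linarith

/-- **Sparsemax: Euclidean projection onto the simplex via a threshold.**
For `z ∈ ℝ^K` (`K ≥ 1`) there is a unique `τ ∈ ℝ` with `Σ_i max(z_i − τ, 0) = 1`;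
moreover, for this `τ`, the vector `y*` with `y*_i = max(z_i − τ, 0)` lies in
`Δ_{K-1}` and is the unique minimizer of the Euclidean distance `‖y − z‖₂` over
`y ∈ Δ_{K-1}`, i.e. `sparsemax(z) = y*`. -/
theorem sparsemax_threshold_characterization (K : ℕ) (hK : 1 ≤ K) (z : Fin K → ℝ) :
    (∃! τ : ℝ, ∑ i : Fin K, max (z i - τ) 0 = 1) ∧
    (∀ τ : ℝ, (∑ i : Fin K, max (z i - τ) 0 = 1) →
      (fun i => max (z i - τ) 0) ∈ stdSimplex ℝ (Fin K) ∧
      (∀ y : Fin K → ℝ, y ∈ stdSimplex ℝ (Fin K) →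
        Real.sqrt (∑ i : Fin K, (max (z i - τ) 0 - z i) ^ 2)
          ≤ Real.sqrt (∑ i : Fin K, (y i - z i) ^ 2)) ∧
      (∀ y : Fin K → ℝ, y ∈ stdSimplex ℝ (Fin K) →
        Real.sqrt (∑ i : Fin K, (y i - z i) ^ 2)
          = Real.sqrt (∑ i : Fin K, (max (z i - τ) 0 - z i) ^ 2) →
        y = fun i => max (z i - τ) 0)) := by
  refine ⟨existsUnique_threshold K hK z, fun τ hτ =>
    ⟨⟨fun i => le_max_right _ _, hτ⟩, fun y hy => ?_, fun y hy heq => ?_⟩⟩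
  · apply Real.sqrt_le_sqrt
    have hsq : 0 ≤ ∑ i : Fin K, (y i - max (z i - τ) 0) ^ 2 :=
      Finset.sum_nonneg fun i _ => sq_nonneg _
    linarith [threshold_pythagoras hτ hy]
  · rw [Real.sqrt_inj (Finset.sum_nonneg fun i _ => sq_nonneg _)
      (Finset.sum_nonneg fun i _ => sq_nonneg _)] at heq
    have hzero : ∑ i : Fin K, (y i - max (z i - τ) 0) ^ 2 = 0 :=
      le_antisymm (by linarith [threshold_pythagoras hτ hy])
        (Finset.sum_nonneg fun i _ => sq_nonneg _)
    rw [Finset.sum_eq_zero_iff_of_nonneg fun i _ => sq_nonneg _] at hzero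
    funext i
    exact sub_eq_zero.1 (pow_eq_zero_iff two_ne_zero |>.1 (hzero i (Finset.mem_univ i)))
end

section
/- For every t ∈ ℝ, the Euclidean projection of the point (t, 0) ∈ ℝ² onto the simplex Δ_1 is the point (s, 1−s) with s = min(1, max(0, (t+1)/2)); that is, for K = 2, sparsemax is a 'hard sigmoid'. In particular the projection equals the vertex (1,0) for all t ≥ 1 and the vertex (0,1) for all t ≤ −1 (saturation at t = ±1). -/
/-!
On the segment `y₂ = 1 - y₁` the squared distance to `(t, 0)` is the quadratic
`f y = (y - t)² + (1 - y)²`, and its expansion at `s` is exact: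
`f y = f s + 2 (2s - t - 1)(y - s) + 2 (y - s)²`.
The clipped vertex `s` of this parabola satisfies the first-order condition
`(2s - t - 1)(y - s) ≥ 0` for `y ∈ [0, 1]` (`clip_variational`), so `f y ≥ f s + 2 (y - s)²`.
This growth bound gives both minimality and uniqueness.
-/

/-- First-order optimality condition for clipping `(t + 1) / 2` to `[0, 1]`. -/
lemma clip_variational (t y : ℝ) (h0 : 0 ≤ y) (h1 : y ≤ 1) :
    0 ≤ (2 * min 1 (max 0 ((t + 1) / 2)) - t - 1) * (y - min 1 (max 0 ((t + 1) / 2))) := by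
  rcases le_total t (-1) with h | h
  · rw [max_eq_left (by linarith), min_eq_right zero_le_one]
    exact mul_nonneg (by linarith) (by linarith)
  · rw [max_eq_right (by linarith)]
    rcases le_total t 1 with h' | h'
    · rw [min_eq_right (by linarith)]
      exact le_of_eq (by ring)
    · rw [min_eq_left (by linarith)]
      exact mul_nonneg_of_nonpos_of_nonpos (by linarith) (by linarith)

/-- **Two-dimensional sparsemax is a hard sigmoid.**
For every `t ∈ ℝ`, the Euclidean projection of `(t, 0) ∈ ℝ²` onto the simplex
`Δ₁ = {(y₁, y₂) : y₁, y₂ ≥ 0, y₁ + y₂ = 1}` is `(s, 1 − s)` with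
`s = min(1, max(0, (t+1)/2))`: the point `(s, 1−s)` lies in `Δ₁`, minimizes the
Euclidean distance to `(t, 0)`, and is the unique such minimizer.  In particular
the projection saturates: it equals the vertex `(1,0)` for all `t ≥ 1` and the
vertex `(0,1)` for all `t ≤ −1`. -/
theorem sparsemax_two_dim_hard_sigmoid (t : ℝ) :
    let s : ℝ := min 1 (max 0 ((t + 1) / 2))
    (0 ≤ s ∧ 0 ≤ 1 - s ∧ s + (1 - s) = 1) ∧
    (∀ y₁ y₂ : ℝ, 0 ≤ y₁ → 0 ≤ y₂ → y₁ + y₂ = 1 →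
      Real.sqrt ((s - t) ^ 2 + (1 - s - 0) ^ 2)
        ≤ Real.sqrt ((y₁ - t) ^ 2 + (y₂ - 0) ^ 2)) ∧
    (∀ y₁ y₂ : ℝ, 0 ≤ y₁ → 0 ≤ y₂ → y₁ + y₂ = 1 →
      Real.sqrt ((y₁ - t) ^ 2 + (y₂ - 0) ^ 2)
        = Real.sqrt ((s - t) ^ 2 + (1 - s - 0) ^ 2) →
      y₁ = s ∧ y₂ = 1 - s) ∧
    (1 ≤ t → s = 1) ∧ (t ≤ -1 → s = 0) := by
  intro s
  have growth : ∀ y₁ y₂ : ℝ, 0 ≤ y₁ → 0 ≤ y₂ → y₁ + y₂ = 1 →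
      (s - t) ^ 2 + (1 - s - 0) ^ 2 + 2 * (y₁ - s) ^ 2 ≤ (y₁ - t) ^ 2 + (y₂ - 0) ^ 2 := by
    intro y₁ y₂ h₁ h₂ h
    have hv : 0 ≤ (2 * s - t - 1) * (y₁ - s) := clip_variational t y₁ h₁ (by linarith)
    obtain rfl : y₂ = 1 - y₁ := by linarith
    linarith
  refine ⟨⟨le_min zero_le_one (le_max_left _ _), sub_nonneg.2 (min_le_left _ _), by ring⟩,
    ?_, ?_, ?_, ?_⟩
  · intro y₁ y₂ h₁ h₂ h
    exact Real.sqrt_le_sqrt (by linarith [growth y₁ y₂ h₁ h₂ h, sq_nonneg (y₁ - s)])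
  · intro y₁ y₂ h₁ h₂ h he
    rw [Real.sqrt_inj (by positivity) (by positivity)] at he
    have hz : (y₁ - s) ^ 2 = 0 :=
      le_antisymm (by linarith [growth y₁ y₂ h₁ h₂ h]) (sq_nonneg _)
    have hy : y₁ = s := sub_eq_zero.1 (pow_eq_zero_iff two_ne_zero |>.1 hz)
    exact ⟨hy, by linarith⟩
  · intro ht
    exact min_eq_left (le_max_of_le_right (by linarith))
  · intro ht
    change min 1 (max 0 ((t + 1) / 2)) = 0
    rw [max_eq_left (by linarith), min_eq_right zero_le_one]
end

section
/- (Gumbel-max trick.) Fix K ≥ 1, z ∈ ℝ^K, and let μ be the product measure on ℝ^K whose coordinates are independent standard Gumbel measures. Then for each k ∈ [K], μ({g ∈ ℝ^K : z_k + g_k > z_j + g_j for all j ≠ k}) = exp(z_k) / Σ_{j=1}^K exp(z_j) = softmax(z)_k; that is, the argmax of independently Gumbel-perturbed scores is distributed as the categorical distribution softmax(z). -/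
/-!
Condition on the `k`-th coordinate, written as `g_k = -log (-log u)` with `u` uniform on `(0,1)`.
The Gumbel distribution function is `t ↦ exp (-exp (-t))`, so each of the other coordinates
satisfies `z_j + g_j < z_k + g_k` with probability `u ^ exp (z_j - z_k)`
(`gumbelMeasure_Iio_quantile`). By independence the conditional probability of the event is `u ^ S`
with `S = ∑_{j ≠ k} exp (z_j - z_k)`, and integrating over `u` gives
`1 / (S + 1) = exp z_k / ∑_j exp z_j`.
-/

open MeasureTheory

/-- The standard Gumbel measure: the pushforward of the uniform probability measure
on `(0,1)` under `u ↦ −log(−log u)`. -/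
noncomputable def gumbelMeasure : Measure ℝ :=
  Measure.map (fun u : ℝ => -Real.log (-Real.log u))
    (volume.restrict (Set.Ioo (0 : ℝ) 1))

lemma measurable_gumbelQuantile : Measurable fun u : ℝ => -Real.log (-Real.log u) := by
  fun_prop

instance : IsProbabilityMeasure gumbelMeasure :=
  have : IsProbabilityMeasure (volume.restrict (Set.Ioo (0 : ℝ) 1)) := ⟨by simp⟩
  Measure.isProbabilityMeasure_map measurable_gumbelQuantile.aemeasurable

/-- The Gumbel distribution function. -/
lemma gumbelMeasure_Iio (t : ℝ) :
    gumbelMeasure (Set.Iio t) = ENNReal.ofReal (Real.exp (-Real.exp (-t))) := by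
  rw [gumbelMeasure, Measure.map_apply measurable_gumbelQuantile measurableSet_Iio,
    Measure.restrict_apply (measurable_gumbelQuantile measurableSet_Iio)]
  have hset : (fun u : ℝ => -Real.log (-Real.log u)) ⁻¹' Set.Iio t ∩ Set.Ioo 0 1
      = Set.Ioo 0 (Real.exp (-Real.exp (-t))) := by
    ext u
    simp only [Set.mem_inter_iff, Set.mem_preimage, Set.mem_Iio, Set.mem_Ioo]
    have key : 0 < u → u < 1 →
        (-Real.log (-Real.log u) < t ↔ u < Real.exp (-Real.exp (-t))) := fun h0 h1 => by
      rw [neg_lt, Real.lt_log_iff_exp_lt (neg_pos.2 (Real.log_neg h0 h1)), lt_neg,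
        Real.log_lt_iff_lt_exp h0]
    have hlt : Real.exp (-Real.exp (-t)) < 1 := by
      simp [Real.exp_pos]
    constructor
    · rintro ⟨h, h0, h1⟩
      exact ⟨h0, (key h0 h1).1 h⟩
    · rintro ⟨h0, h⟩
      exact ⟨(key h0 (h.trans hlt)).2 h, h0, h.trans hlt⟩
  rw [hset, Real.volume_Ioo, sub_zero]

/-- The distribution function at a shifted quantile is a power of the uniform variable; this is
what reduces the computation to an integral of a power of `u` over `(0,1)`. -/
lemma gumbelMeasure_Iio_quantile (a : ℝ) {u : ℝ} (h0 : 0 < u) (h1 : u < 1) :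
    gumbelMeasure (Set.Iio (-Real.log (-Real.log u) - a))
      = ENNReal.ofReal (u ^ Real.exp a) := by
  rw [gumbelMeasure_Iio, neg_sub, sub_neg_eq_add, Real.exp_add,
    Real.exp_log (neg_pos.2 (Real.log_neg h0 h1)), Real.rpow_def_of_pos h0]
  congr 2
  ring

lemma lintegral_rpow_Ioo {S : ℝ} (hS : 0 ≤ S) :
    ∫⁻ u in Set.Ioo (0 : ℝ) 1, ENNReal.ofReal (u ^ S) = ENNReal.ofReal (1 / (S + 1)) := by
  have hint : IntervalIntegrable (fun u : ℝ => u ^ S) volume 0 1 :=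
    intervalIntegral.intervalIntegrable_rpow' (by linarith)
  rw [← setLIntegral_congr Ioo_ae_eq_Ioc.symm, ← ofReal_integral_eq_lintegral_ofReal,
    ← intervalIntegral.integral_of_le zero_le_one, integral_rpow (Or.inl (by linarith))]
  · rw [Real.one_rpow, Real.zero_rpow (by linarith), sub_zero]
  · exact (intervalIntegrable_iff_integrableOn_Ioc_of_le zero_le_one).1 hint
  · filter_upwards [ae_restrict_mem measurableSet_Ioc] with u hu
    exact Real.rpow_nonneg hu.1.le _

/-- **The Gumbel-max trick.**  For `z ∈ ℝ^K` and `μ` the product of `K` independent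
standard Gumbel measures, the probability that coordinate `k` attains the strict
argmax of the perturbed scores `z_j + g_j` equals `softmax(z)_k`. -/
theorem gumbel_max_trick (K : ℕ) (hK : 1 ≤ K) (z : Fin K → ℝ) (k : Fin K) :
    Measure.pi (fun _ : Fin K => gumbelMeasure)
        {g : Fin K → ℝ | ∀ j : Fin K, j ≠ k → z j + g j < z k + g k}
      = ENNReal.ofReal (Real.exp (z k) / ∑ j : Fin K, Real.exp (z j)) := by
  obtain _ | n := K
  · exact k.elim0
  -- `A` is the event in the coordinates `(g k, (g j)_{j ≠ k})`.
  set A : Set (ℝ × (Fin n → ℝ)) :=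
    {p | ∀ j, p.2 j < p.1 - (z (k.succAbove j) - z k)} with hA
  have hAmeas : MeasurableSet A := by
    rw [hA, Set.ofPred_forall]
    exact MeasurableSet.iInter fun j => measurableSet_lt (by fun_prop) (by fun_prop)
  have hpre : {g : Fin (n + 1) → ℝ | ∀ j, j ≠ k → z j + g j < z k + g k}
      = MeasurableEquiv.piFinSuccAbove (fun _ => ℝ) k ⁻¹' A := by
    ext g
    simp only [hA, Set.mem_ofPred_eq, Set.mem_preimage, Fin.forall_iff_succAbove k,
      MeasurableEquiv.piFinSuccAbove_apply, Fin.insertNthEquiv_symm_apply, Fin.removeNth]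
    simp only [ne_eq, not_true_eq_false, false_implies, true_and, Fin.succAbove_ne,
      not_false_eq_true, true_implies]
    exact forall_congr' fun j => by constructor <;> intro h <;> linarith
  have hmeas : Measurable fun x => Measure.pi (fun _ : Fin n => gumbelMeasure)
      (Prod.mk x ⁻¹' A) := measurable_measure_prodMk_left hAmeas
  rw [hpre, (measurePreserving_piFinSuccAbove (fun _ => gumbelMeasure) k).measure_preimage
    hAmeas.nullMeasurableSet, Measure.prod_apply hAmeas]
  set S : ℝ := ∑ j : Fin n, Real.exp (z (k.succAbove j) - z k) with hS
  have hS0 : 0 ≤ S := Finset.sum_nonneg fun j _ => (Real.exp_pos _).le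
  have hslice : ∀ u ∈ Set.Ioo (0 : ℝ) 1,
      Measure.pi (fun _ : Fin n => gumbelMeasure) (Prod.mk (-Real.log (-Real.log u)) ⁻¹' A)
        = ENNReal.ofReal (u ^ S) := by
    rintro u ⟨h0, h1⟩
    have hbox : Prod.mk (-Real.log (-Real.log u)) ⁻¹' A = Set.univ.pi fun j =>
        Set.Iio (-Real.log (-Real.log u) - (z (k.succAbove j) - z k)) := by
      ext y
      simp [hA]
    rw [hbox, Measure.pi_pi]
    simp only [gumbelMeasure_Iio_quantile _ h0 h1]
    rw [← ENNReal.ofReal_prod_of_nonneg fun _ _ => Real.rpow_nonneg h0.le _,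
      ← Real.rpow_sum_of_pos h0]
  calc ∫⁻ x, Measure.pi (fun _ : Fin n => gumbelMeasure) (Prod.mk x ⁻¹' A) ∂gumbelMeasure
      = ∫⁻ u in Set.Ioo (0 : ℝ) 1, Measure.pi (fun _ : Fin n => gumbelMeasure)
          (Prod.mk (-Real.log (-Real.log u)) ⁻¹' A) :=
        lintegral_map hmeas measurable_gumbelQuantile
    _ = ∫⁻ u in Set.Ioo (0 : ℝ) 1, ENNReal.ofReal (u ^ S) :=
        setLIntegral_congr_fun measurableSet_Ioo hslice
    _ = ENNReal.ofReal (1 / (S + 1)) := lintegral_rpow_Ioo hS0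
    _ = _ := by
        have hsum : ∑ j, Real.exp (z j) = Real.exp (z k) * (S + 1) := by
          rw [Fin.sum_univ_succAbove _ k, hS, mul_add, mul_one, Finset.mul_sum, add_comm]
          simp only [← Real.exp_add, add_sub_cancel]
        rw [hsum, ← div_div, div_self (Real.exp_pos _).ne']
end

section
/- (Proposition 2, item 4.) Fix K ≥ 1. Let L be a mixed regular language over the alphabet [K], i.e., a finitely recognizable language over the alphabet Δ_{K-1}. Then its projection proj(L) = { u ∈ [K]* : there exists x ∈ L with the same length as u and u_i ∈ supp(x_i) for every position i } is a finitely recognizable (regular) language over the finite alphabet [K]. -/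
/-!
Keep the states of an NFA recognizing `L` and relabel its transitions: `s → t` on the letter `a`
is allowed when the original NFA has a transition `s → t` on some `y` with `a ∈ supp y`. Choosing
such a `y` at each step shows that the states reached on `u` are exactly those reached by the
original NFA on some `x` with `uᵢ ∈ supp xᵢ` (`NFA.mem_evalFrom_pullback`). The letters of the
infinite alphabet are never stored in the states, so finiteness of the state set is preserved.
-/

/-- A language over an (arbitrary, possibly infinite) alphabet `α` is finitely
recognizable if it is accepted by some NFA with finitely many states. -/
def FinRecognizable {α : Type*} (L : Language α) : Prop :=
  ∃ (σ : Type) (_ : Fintype σ) (M : NFA α σ), M.accepts = L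

/-- The NFA over `α` obtained from an NFA over `β` by reading `a` as any letter `b` with
`R a b`. -/
def NFA.pullback {α β σ : Type*} (R : α → β → Prop) (M : NFA β σ) : NFA α σ where
  step s a := {t | ∃ b, R a b ∧ t ∈ M.step s b}
  start := M.start
  accept := M.accept

theorem NFA.mem_evalFrom_pullback {α β σ : Type*} (R : α → β → Prop) (M : NFA β σ)
    (u : List α) (S : Set σ) (t : σ) :
    t ∈ (M.pullback R).evalFrom S u ↔ ∃ x, List.Forall₂ R u x ∧ t ∈ M.evalFrom S x := by
  induction u generalizing S with
  | nil => simp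
  | cons a u ih =>
    have hstep : (M.pullback R).stepSet S a = ⋃ (b) (_ : R a b), M.stepSet S b := by
      ext t
      simp only [NFA.mem_stepSet, NFA.pullback, Set.mem_ofPred_eq, Set.mem_iUnion]
      grind
    rw [NFA.evalFrom_cons, hstep, NFA.evalFrom_iUnion₂]
    simp only [Set.mem_iUnion, ih, List.forall₂_cons_left_iff]
    constructor
    · rintro ⟨b, hb, x, hx, ht⟩
      exact ⟨b :: x, ⟨b, x, hb, hx, rfl⟩, ht⟩
    · rintro ⟨_, ⟨b, x, hb, hx, rfl⟩, ht⟩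
      exact ⟨b, hb, x, hx, ht⟩

/-- **The projection of a mixed regular language is regular** (Proposition 2, item 4).
If `L` is a finitely recognizable language over the alphabet `Δ_{K-1}` (a mixed
regular language), then its projection
`proj(L) = {u ∈ [K]* : ∃ x ∈ L of the same length with uᵢ ∈ supp(xᵢ) for all i}`
is a finitely recognizable (regular) language over the finite alphabet `[K]`. -/
theorem projection_of_mixed_regular_is_regular (K : ℕ) (hK : 1 ≤ K)
    (L : Language (stdSimplex ℝ (Fin K))) (hL : FinRecognizable L) :
    FinRecognizable ({u : List (Fin K) | ∃ x ∈ L,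
        List.Forall₂ (fun (a : Fin K) (y : stdSimplex ℝ (Fin K)) => 0 < y.1 a) u x} :
      Language (Fin K)) := by
  obtain ⟨σ, hσ, M, rfl⟩ := hL
  refine ⟨σ, hσ, M.pullback fun a y => 0 < y.1 a, ?_⟩
  ext u
  change (∃ t ∈ M.accept, t ∈ (M.pullback _).evalFrom M.start u) ↔
    ∃ x, (∃ t ∈ M.accept, t ∈ M.evalFrom M.start x) ∧ _
  simp only [NFA.mem_evalFrom_pullback]
  grind
end

section
/- (Binary Gumbel-softmax density.) Let β > 0, z ∈ ℝ, π = 1/(1 + exp(−z)), and let λ be the standard logistic measure. Then the pushforward of λ under the map l ↦ sigmoid((z + l)/β) is supported on (0,1) and has density with respect to Lebesgue measure given by p(y) = β · π(1−π) · y^{−β−1} (1−y)^{−β−1} · ( π y^{−β} + (1−π)(1−y)^{−β} )^{−2} for y ∈ (0,1); that is, for every measurable A ⊆ (0,1), the pushforward measure of A equals ∫_A p(y) dy. -/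
/-!
With `logit u = log u - log (1 - u)`, inverse to the sigmoid on `(0,1)`, the variable in question is
`F(U)` where `U` is uniform on `(0,1)` and `F(u) = sigmoid ((z + logit u) / β)`. The map `F` is a
bijection of `(0,1)` with inverse `G(y) = sigmoid (β * logit y - z)`, so for `A ⊆ (0,1)` the
pushforward of `A` is the Lebesgue measure of `G '' A`, which is `∫_A |G'|` by the one-dimensional
change of variables formula. The rest is the computation of
`G'(y) = G(y) (1 - G(y)) β / (y (1 - y))`, using
`G(y) = (1 - π) (1 - y)^(-β) / (π y^(-β) + (1 - π) (1 - y)^(-β))`.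
-/

open MeasureTheory

/-- The standard logistic measure: the pushforward of the uniform probability
measure on `(0,1)` under `u ↦ log u − log(1 − u)`. -/
noncomputable def logisticMeasure : Measure ℝ :=
  Measure.map (fun u : ℝ => Real.log u - Real.log (1 - u))
    (volume.restrict (Set.Ioo (0 : ℝ) 1))

/-- The sigmoid function `x ↦ 1/(1 + exp(−x))`. -/
noncomputable def sigmoid (x : ℝ) : ℝ := 1 / (1 + Real.exp (-x))

lemma sigmoid_eq_real_sigmoid (x : ℝ) : sigmoid x = Real.sigmoid x := by
  simp [sigmoid, Real.sigmoid_def]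

lemma sigmoid_mem_Ioo (x : ℝ) : sigmoid x ∈ Set.Ioo (0 : ℝ) 1 := by
  rw [sigmoid_eq_real_sigmoid]
  exact ⟨Real.sigmoid_pos x, Real.sigmoid_lt_one x⟩

lemma measurable_sigmoid_affine (β z : ℝ) :
    Measurable (fun l : ℝ => sigmoid ((z + l) / β)) := by
  unfold sigmoid
  fun_prop

lemma logit_sigmoid (x : ℝ) : Real.log (sigmoid x) - Real.log (1 - sigmoid x) = x := by
  have h : 1 - sigmoid x = Real.exp (-x) * sigmoid x := by
    unfold sigmoid
    field_simp
    ring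
  have hpos := (sigmoid_mem_Ioo x).1
  rw [h, Real.log_mul (Real.exp_ne_zero _) hpos.ne', Real.log_exp]
  ring

lemma sigmoid_logit {u : ℝ} (hu : u ∈ Set.Ioo (0 : ℝ) 1) :
    sigmoid (Real.log u - Real.log (1 - u)) = u := by
  have h0 : 0 < u := hu.1
  have h1 : 0 < 1 - u := sub_pos.2 hu.2
  rw [sigmoid, neg_sub, Real.exp_sub, Real.exp_log h0, Real.exp_log h1]
  field_simp
  ring

/-- The density `p` of the theorem is the derivative of `G(y) = sigmoid (β * logit y - z)`. -/
lemma hasDerivAt_sigmoid_logit (β z : ℝ) {y : ℝ} (hy : y ∈ Set.Ioo (0 : ℝ) 1) :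
    HasDerivAt (fun y : ℝ => sigmoid (β * (Real.log y - Real.log (1 - y)) - z))
      (β * (1 / (1 + Real.exp (-z)) * (1 - 1 / (1 + Real.exp (-z)))) * y ^ (-β - 1)
        * (1 - y) ^ (-β - 1)
        * (1 / (1 + Real.exp (-z)) * y ^ (-β)
          + (1 - 1 / (1 + Real.exp (-z))) * (1 - y) ^ (-β)) ^ (-(2 : ℝ))) y := by
  have h0 : 0 < y := hy.1
  have h1 : 0 < 1 - y := sub_pos.2 hy.2
  have hlogit : HasDerivAt (fun y : ℝ => β * (Real.log y - Real.log (1 - y)) - z)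
      (β * (y⁻¹ - (-1) / (1 - y))) y :=
    (((Real.hasDerivAt_log h0.ne').sub
      (((hasDerivAt_id y).const_sub 1).log h1.ne')).const_mul β).sub_const z
  have hG := (Real.hasDerivAt_sigmoid _).comp y hlogit
  simp only [sigmoid_eq_real_sigmoid]
  refine hG.congr_deriv ?_
  have ea : Real.exp (-(β * (Real.log y - Real.log (1 - y)) - z))
      = y ^ (-β) / (1 - y) ^ (-β) / Real.exp (-z) := by
    rw [Real.rpow_def_of_pos h0, Real.rpow_def_of_pos h1, ← Real.exp_sub, ← Real.exp_sub]
    congr 1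
    ring
  have ha : 0 < y ^ (-β) := Real.rpow_pos_of_pos h0 _
  have hb : 0 < (1 - y) ^ (-β) := Real.rpow_pos_of_pos h1 _
  have he : 0 < Real.exp (-z) := Real.exp_pos _
  rw [Real.sigmoid_def, ea, Real.rpow_sub_one h0.ne', Real.rpow_sub_one h1.ne']
  generalize y ^ (-β) = a at *
  generalize (1 - y) ^ (-β) = b at *
  generalize Real.exp (-z) = e at *
  have hD : 1 / (1 + e) * a + (1 - 1 / (1 + e)) * b = (a + e * b) / (1 + e) := by
    field_simp
    ring
  have hs : (1 + a / b / e)⁻¹ = e * b / (a + e * b) := by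
    field_simp
    ring
  rw [hD, hs, Real.rpow_neg (by positivity), Real.rpow_two]
  have hD0 : a + e * b ≠ 0 := by positivity
  field_simp
  ring

/-- **The binary Gumbel-softmax (concrete) density.**
For temperature `β > 0`, logit `z`, and `π = sigmoid(z)`, the pushforward of the
standard logistic measure under `l ↦ sigmoid((z + l)/β)` is supported on `(0,1)`
and has density
`p(y) = β π(1−π) y^{−β−1}(1−y)^{−β−1} (π y^{−β} + (1−π)(1−y)^{−β})^{−2}`
with respect to Lebesgue measure: the complement of `(0,1)` is null, and for every
measurable `A ⊆ (0,1)` the pushforward of `A` equals `∫_A p(y) dy`. -/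
theorem binary_gumbel_softmax_density (β z : ℝ) (hβ : 0 < β) :
    let π : ℝ := 1 / (1 + Real.exp (-z))
    let p : ℝ → ℝ := fun y =>
      β * (π * (1 - π)) * y ^ (-β - 1) * (1 - y) ^ (-β - 1)
        * (π * y ^ (-β) + (1 - π) * (1 - y) ^ (-β)) ^ (-(2 : ℝ))
    Measure.map (fun l : ℝ => sigmoid ((z + l) / β)) logisticMeasure
        ((Set.Ioo (0 : ℝ) 1)ᶜ) = 0 ∧
    ∀ A : Set ℝ, MeasurableSet A → A ⊆ Set.Ioo (0 : ℝ) 1 →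
      Measure.map (fun l : ℝ => sigmoid ((z + l) / β)) logisticMeasure A
        = ∫⁻ y in A, ENNReal.ofReal (p y) := by
  intro π p
  have hF := measurable_sigmoid_affine β z
  refine ⟨?_, fun A hA hA01 => ?_⟩
  · rw [Measure.map_apply hF measurableSet_Ioo.compl]
    convert measure_empty (μ := logisticMeasure)
    ext l
    simpa using sigmoid_mem_Ioo ((z + l) / β)
  have hlogit : Measurable (fun u : ℝ => Real.log u - Real.log (1 - u)) := by fun_prop
  rw [Measure.map_apply hF hA, logisticMeasure, Measure.map_apply hlogit (hF hA),
    Measure.restrict_apply (hlogit (hF hA))]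
  set G : ℝ → ℝ := fun y => sigmoid (β * (Real.log y - Real.log (1 - y)) - z) with hGdef
  have hFG : ∀ y ∈ Set.Ioo (0 : ℝ) 1,
      sigmoid ((z + (Real.log (G y) - Real.log (1 - G y))) / β) = y := by
    intro y hy
    rw [hGdef, logit_sigmoid, add_sub_cancel, mul_div_cancel_left₀ _ hβ.ne', sigmoid_logit hy]
  have himage : (fun u : ℝ => Real.log u - Real.log (1 - u)) ⁻¹'
      ((fun l : ℝ => sigmoid ((z + l) / β)) ⁻¹' A) ∩ Set.Ioo 0 1 = G '' A := by
    ext u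
    constructor
    · rintro ⟨hu, hu01⟩
      refine ⟨_, hu, ?_⟩
      simp only [hGdef]
      rw [logit_sigmoid, mul_div_cancel₀ _ hβ.ne', add_sub_cancel_left, sigmoid_logit hu01]
    · rintro ⟨y, hy, rfl⟩
      refine ⟨?_, sigmoid_mem_Ioo _⟩
      simpa only [Set.mem_preimage, hFG y (hA01 hy)] using hy
  have hinj : Set.InjOn G A := by
    intro x hx y hy hxy
    rw [← hFG x (hA01 hx), hxy, hFG y (hA01 hy)]
  have hcov := lintegral_image_eq_lintegral_abs_deriv_mul hA
    (fun y hy => (hasDerivAt_sigmoid_logit β z (hA01 hy)).hasDerivWithinAt) hinj (fun _ => 1)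
  rw [himage]
  rw [setLIntegral_one] at hcov
  rw [hcov]
  refine setLIntegral_congr_fun hA fun y hy => ?_
  have h0 : 0 < y := (hA01 hy).1
  have h1 : 0 < 1 - y := sub_pos.2 (hA01 hy).2
  have hπ : 0 < π ∧ 0 < 1 - π := by
    have h := sigmoid_mem_Ioo z
    exact ⟨h.1, sub_pos.2 h.2⟩
  have hp : 0 ≤ p y := by
    obtain ⟨hπ0, hπ1⟩ := hπ
    positivity
  rw [mul_one]
  exact congrArg ENNReal.ofReal (abs_of_nonneg hp)
end
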